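/- (John–Nirenberg inequality for product Carleson measures.) Let $d \ge 1$, $1 < p < \infty$, and $\alpha : \mathcal{D}^d \to [0,\infty)$. Define $\|\alpha\|_{CM} = \sup_{\mathcal{U}} |\operatorname{sh}(\mathcal{U})|^{-1} \sum_{R \in \mathcal{U}} \alpha(R)$, the supremum over all collections $\mathcal{U}$ of dyadic rectangles with $0 < |\operatorname{sh}(\mathcal{U})| < \infty$. Then there is a constant $C_{p,d}$ such that for all such collections $\mathcal{U}$, $\big\| \sum_{R \in \mathcal{U}} \frac{\alpha(R)}{|R|} \mathbf{1}_R \big\|_{L^p} \le C_{p,d}\, \|\alpha\|_{CM}\, |\operatorname{sh}(\mathcal{U})|^{1/p}$. -/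

import Mathlib

open MeasureTheory Set

noncomputable section

/-- The dyadic interval `[j2^k, (j+1)2^k)`. -/
def dI (j k : ℤ) : Set ℝ := Set.Ico ((j:ℝ) * 2 ^ k) (((j:ℝ) + 1) * 2 ^ k)

/-- A dyadic rectangle in `ℝ^d`, encoded by the data `(j_i, k_i)` of its side in each
coordinate. -/
abbrev RectD (d : ℕ) := Fin d → ℤ × ℤ

/-- The dyadic rectangle of `ℝ^d` associated to the data `R`. -/
def rectD {d : ℕ} (R : RectD d) : Set (Fin d → ℝ) :=
  Set.univ.pi fun i => dI (R i).1 (R i).2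

/-- The shadow `⋃_{R ∈ 𝓤} R` of a collection of dyadic rectangles in `ℝ^d`. -/
def shD {d : ℕ} (𝓤 : Set (RectD d)) : Set (Fin d → ℝ) := ⋃ R ∈ 𝓤, rectD R

open scoped ENNReal

lemma lc (r : ℝ) (hr : 0 < r) (y : ℝ≥0∞) :
    ENNReal.ofReal r * ∫⁻ t in Ioi (0:ℝ),
      (if ENNReal.ofReal t < y then ENNReal.ofReal (t ^ (r - 1)) else 0) = y ^ r := by
  have key : ∀ b : ℝ, 0 ≤ b → ENNReal.ofReal r * ∫⁻ t in Ioi (0:ℝ),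
      (if ENNReal.ofReal t < ENNReal.ofReal b then ENNReal.ofReal (t ^ (r - 1)) else 0)
        = (ENNReal.ofReal b) ^ r := by
    intro b hb
    have := lintegral_rpow_eq_lintegral_meas_lt_mul (Measure.dirac ()) (f := fun _ => b)
      (Filter.Eventually.of_forall fun _ => hb) aemeasurable_const hr
    simp only [lintegral_dirac] at this
    rw [ENNReal.ofReal_rpow_of_nonneg hb hr.le, this]
    congr 1
    refine setLIntegral_congr_fun measurableSet_Ioi fun t ht => ?_
    simp only [mem_Ioi] at ht
    by_cases h : t < b
    · simp [h, ENNReal.ofReal_lt_ofReal_iff (ht.trans h)]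
    · have : ¬ ENNReal.ofReal t < ENNReal.ofReal b :=
        not_lt.2 (ENNReal.ofReal_le_ofReal (not_lt.1 h))
      simp [h, this]
  by_cases hy : y = ⊤
  · subst hy
    rw [ENNReal.top_rpow_of_pos hr]
    refine ENNReal.eq_top_of_forall_nnreal_le fun c => ?_
    have := key ((c:ℝ) ^ (1 / r)) (by positivity)
    rw [ENNReal.ofReal_rpow_of_nonneg (by positivity) hr.le, ← Real.rpow_mul (by positivity),
      one_div_mul_cancel hr.ne', Real.rpow_one, ENNReal.ofReal_coe_nnreal] at this
    rw [← this]
    gcongr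
    split_ifs <;> simp_all
  · have := key y.toReal (by positivity)
    rwa [ENNReal.ofReal_toReal hy] at this

lemma mem_dI {j k : ℤ} {x : ℝ} : x ∈ dI j k ↔ ⌊x / 2 ^ k⌋ = j := by
  have : (0:ℝ) < 2 ^ k := by positivity
  rw [Int.floor_eq_iff, le_div_iff₀ this, div_lt_iff₀ this]
  rfl

lemma dI_nested {j k j' l : ℤ} (h : k ≤ l) {x : ℝ} (hx : x ∈ dI j k) (hx' : x ∈ dI j' l) :
    dI j k ⊆ dI j' l := by
  intro y hy
  rw [mem_dI] at *
  obtain ⟨n, rfl⟩ := Int.le.dest h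
  have e : ∀ z : ℝ, z / 2 ^ (k + (n:ℤ)) = (z / 2 ^ k) / ((2 ^ n : ℕ) : ℝ) := by
    intro z
    rw [zpow_add₀ (by norm_num)]; push_cast; rw [zpow_natCast, div_div]
  rw [e, Int.floor_div_natCast] at *
  rw [hy, ← hx', hx]

lemma measurableSet_dI (j k : ℤ) : MeasurableSet (dI j k) := measurableSet_Ico

lemma volume_dI (j k : ℤ) : volume (dI j k) = ENNReal.ofReal (2 ^ k) := by
  rw [dI, Real.volume_Ico]; congr 1; ring

lemma volume_dI_ne_zero (j k : ℤ) : volume (dI j k) ≠ 0 := by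
  rw [volume_dI]; simp; positivity

lemma volume_dI_ne_top (j k : ℤ) : volume (dI j k) ≠ ⊤ := by
  rw [volume_dI]; simp

/-- disjoint subfamily -/
lemma disj_sub (T : Finset (ℤ × ℤ)) : ∃ T' ⊆ T,
    ((T' : Set (ℤ × ℤ)).PairwiseDisjoint fun z => dI z.1 z.2) ∧
    (⋃ z ∈ T, dI z.1 z.2) ⊆ ⋃ z ∈ T', dI z.1 z.2 := by
  classical
  induction T using Finset.induction_on_min_value (fun z : ℤ × ℤ => z.2) with
  | empty => exact ⟨∅, by simp⟩
  | insert a s ha hmin ih =>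
    obtain ⟨T', hT, hd, hc⟩ := ih
    by_cases h : ∃ z ∈ T', ¬ Disjoint (dI a.1 a.2) (dI z.1 z.2)
    · obtain ⟨z, hz, hzd⟩ := h
      refine ⟨T', hT.trans (Finset.subset_insert _ _), hd, ?_⟩
      rw [Finset.set_biUnion_insert]
      refine union_subset ?_ hc
      obtain ⟨x, hx1, hx2⟩ := Set.not_disjoint_iff.1 hzd
      exact (dI_nested (hmin z (hT hz)) hx1 hx2).trans (subset_biUnion_of_mem (u := fun z : ℤ × ℤ => dI z.1 z.2) hz)
    · push Not at h
      refine ⟨insert a T', Finset.insert_subset_insert _ hT, ?_, ?_⟩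
      · rw [Finset.coe_insert]
        exact hd.insert fun j hj _ => h j hj
      · rw [Finset.set_biUnion_insert, Finset.set_biUnion_insert]
        exact union_subset_union_right _ hc

/-- average -/
def av (f : ℝ → ℝ≥0∞) (z : ℤ × ℤ) : ℝ≥0∞ := (∫⁻ t in dI z.1 z.2, f t) / volume (dI z.1 z.2)

/-- dyadic maximal function -/
def Mx (f : ℝ → ℝ≥0∞) (x : ℝ) : ℝ≥0∞ :=
  ⨆ z : ℤ × ℤ, (dI z.1 z.2).indicator (fun _ => av f z) x

lemma measurable_Mx (f : ℝ → ℝ≥0∞) : Measurable (Mx f) :=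
  Measurable.iSup fun z => measurable_const.indicator (measurableSet_dI _ _)

lemma weak_union (f : ℝ → ℝ≥0∞) (c : ℝ≥0∞) :
    c * volume (⋃ z : {z : ℤ × ℤ // c < av f z}, dI z.1.1 z.1.2) ≤ ∫⁻ x, f x := by
  classical
  rw [Set.iUnion_eq_iUnion_finset, Directed.measure_iUnion, ENNReal.mul_iSup]
  swap
  · refine Monotone.directed_le fun s t hst => ?_
    exact biUnion_subset_biUnion_left hst
  refine iSup_le fun t => ?_
  obtain ⟨T', hT, hd, hc⟩ := disj_sub (t.image Subtype.val)
  have hsub : (⋃ z ∈ t, dI z.1.1 z.1.2) ⊆ ⋃ z ∈ T', dI z.1 z.2 := by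
    refine subset_trans ?_ hc
    simp only [iUnion_subset_iff]
    intro z hz
    exact subset_biUnion_of_mem (u := fun z : ℤ × ℤ => dI z.1 z.2) (Finset.mem_image_of_mem _ hz)
  calc _ ≤ c * volume (⋃ z ∈ T', dI z.1 z.2) := by gcongr
    _ = ∑ z ∈ T', c * volume (dI z.1 z.2) := by
      rw [measure_biUnion_finset hd fun z _ => measurableSet_dI _ _, Finset.mul_sum]
    _ ≤ ∑ z ∈ T', ∫⁻ x in dI z.1 z.2, f x := by
      refine Finset.sum_le_sum fun z hz => ?_
      obtain ⟨w, _, rfl⟩ := Finset.mem_image.1 (hT hz)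
      have := w.2
      rw [av, ENNReal.lt_div_iff_mul_lt (Or.inl (volume_dI_ne_zero _ _)) (Or.inl (volume_dI_ne_top _ _))] at this
      exact this.le
    _ = ∫⁻ x in ⋃ z ∈ T', dI z.1 z.2, f x := by
      rw [lintegral_biUnion_finset hd fun z _ => measurableSet_dI _ _]
    _ ≤ _ := setLIntegral_le_lintegral _ _

lemma weak_Mx (f : ℝ → ℝ≥0∞) (hf : Measurable f) (t : ℝ) (ht : 0 < t) :
    volume {x | ENNReal.ofReal t < Mx f x} ≤
      ENNReal.ofReal (2 / t) * ∫⁻ x, (if ENNReal.ofReal t < 2 * f x then f x else 0) := by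
  set c := ENNReal.ofReal (t / 2) with hc
  have hc2 : ENNReal.ofReal t = c + c := by
    rw [hc, ← ENNReal.ofReal_add (by positivity) (by positivity)]; congr 1; ring
  set g : ℝ → ℝ≥0∞ := fun x => if ENNReal.ofReal t < 2 * f x then f x else 0 with hg
  have hfg : ∀ x, f x ≤ g x + c := by
    intro x
    by_cases h : ENNReal.ofReal t < 2 * f x
    · simp [hg, h]
    · simp only [hg, h, if_false, zero_add]
      rw [hc2, ← two_mul, not_lt, ENNReal.mul_le_mul_iff_right (by simp) (by simp)] at h
      exact h
  have hgm : Measurable g := Measurable.ite (measurableSet_lt measurable_const (hf.const_mul _)) hf measurable_const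
  have hav : ∀ z, ENNReal.ofReal t < av f z → c < av g z := by
    intro z hz
    have : av f z ≤ av g z + c := by
      unfold av
      calc _ ≤ (∫⁻ x in dI z.1 z.2, (g x + c)) / volume (dI z.1 z.2) := by
            gcongr; exact hfg _
        _ = _ := by
            rw [lintegral_add_left hgm, ENNReal.add_div]
            simp [ENNReal.mul_div_cancel_right (volume_dI_ne_zero z.1 z.2) (volume_dI_ne_top _ _)]
    rw [hc2] at hz
    have := hz.trans_le this
    exact lt_of_add_lt_add_right this
  have hsub : {x | ENNReal.ofReal t < Mx f x} ⊆ ⋃ z : {z : ℤ × ℤ // c < av g z}, dI z.1.1 z.1.2 := by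
    intro x hx
    simp only [mem_ofPred_eq, Mx, lt_iSup_iff] at hx
    obtain ⟨z, hz⟩ := hx
    by_cases hxz : x ∈ dI z.1 z.2
    · rw [indicator_of_mem hxz] at hz
      exact mem_iUnion.2 ⟨⟨z, hav z hz⟩, hxz⟩
    · simp [indicator_of_notMem hxz] at hz
  have h1 := weak_union g c
  have h2 : ENNReal.ofReal (2 / t) * c = 1 := by
    rw [hc, ← ENNReal.ofReal_mul (by positivity)]
    rw [show 2 / t * (t / 2) = 1 by field_simp]; simp
  calc _ ≤ volume (⋃ z : {z : ℤ × ℤ // c < av g z}, dI z.1.1 z.1.2) := measure_mono hsub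
    _ = ENNReal.ofReal (2 / t) * (c * volume (⋃ z : {z : ℤ × ℤ // c < av g z}, dI z.1.1 z.1.2)) := by
      rw [← mul_assoc, h2, one_mul]
    _ ≤ _ := by gcongr

lemma strong_Mx (q : ℝ) (hq : 1 < q) : ∃ K : ℝ≥0∞, K ≠ ⊤ ∧ ∀ f : ℝ → ℝ≥0∞, Measurable f →
    ∫⁻ x, Mx f x ^ q ≤ K * ∫⁻ x, f x ^ q := by
  have hq0 : 0 < q := by linarith
  have hq1 : 0 < q - 1 := by linarith
  refine ⟨ENNReal.ofReal q * 2 * ((ENNReal.ofReal (q-1))⁻¹ * 2 ^ (q - 1)), ?_, fun f hf => ?_⟩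
  · refine ENNReal.mul_ne_top (by finiteness) (ENNReal.mul_ne_top ?_ ?_)
    · simp [hq]
    · exact ENNReal.rpow_ne_top_of_nonneg hq1.le (by simp)
  have mA : Measurable fun (z : ℝ × ℝ) => if ENNReal.ofReal z.2 < Mx f z.1 then ENNReal.ofReal (z.2 ^ (q-1)) else 0 := by
    refine Measurable.ite (measurableSet_lt (by fun_prop) ((measurable_Mx f).comp measurable_fst)) (by fun_prop) measurable_const
  have mB : Measurable fun (z : ℝ × ℝ) => if ENNReal.ofReal z.1 < 2 * f z.2 then f z.2 * ENNReal.ofReal (z.1 ^ (q-1-1)) else 0 := by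
    refine Measurable.ite (measurableSet_lt (by fun_prop) (by fun_prop)) (by fun_prop) measurable_const
  calc ∫⁻ x, Mx f x ^ q = ∫⁻ x, ENNReal.ofReal q * ∫⁻ t in Ioi (0:ℝ),
      (if ENNReal.ofReal t < Mx f x then ENNReal.ofReal (t ^ (q - 1)) else 0) := by
        simp_rw [lc q hq0]
    _ = ENNReal.ofReal q * ∫⁻ t in Ioi (0:ℝ), ∫⁻ x, 
      (if ENNReal.ofReal t < Mx f x then ENNReal.ofReal (t ^ (q - 1)) else 0) := by
        rw [lintegral_const_mul' _ _ (by simp), lintegral_lintegral_swap]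
        exact mA.aemeasurable
    _ ≤ ENNReal.ofReal q * ∫⁻ t in Ioi (0:ℝ), 2 * ∫⁻ x, 
      (if ENNReal.ofReal t < 2 * f x then f x * ENNReal.ofReal (t ^ (q - 1 - 1)) else 0) := by
        refine mul_le_mul' le_rfl ?_
        refine setLIntegral_mono' (s := Ioi (0:ℝ)) measurableSet_Ioi fun t ht => ?_
        have ht : 0 < t := ht
        have e1 : ∫⁻ x, (if ENNReal.ofReal t < Mx f x then ENNReal.ofReal (t ^ (q - 1)) else 0)
          = ENNReal.ofReal (t ^ (q-1)) * volume {x | ENNReal.ofReal t < Mx f x} := by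
          rw [← lintegral_indicator_const (s := {x | ENNReal.ofReal t < Mx f x}) (measurableSet_lt measurable_const (measurable_Mx f))]
          refine lintegral_congr fun x => ?_
          simp [indicator]
        have e2 : ∫⁻ x, (if ENNReal.ofReal t < 2 * f x then f x * ENNReal.ofReal (t ^ (q - 1 - 1)) else 0)
          = ENNReal.ofReal (t ^ (q-1-1)) * ∫⁻ x, (if ENNReal.ofReal t < 2 * f x then f x else 0) := by
          rw [← lintegral_const_mul' _ _ (by simp)]
          refine lintegral_congr fun x => ?_
          split_ifs <;> simp [mul_comm]
        rw [e1, e2]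
        calc _ ≤ ENNReal.ofReal (t ^ (q-1)) * (ENNReal.ofReal (2 / t) *
              ∫⁻ x, (if ENNReal.ofReal t < 2 * f x then f x else 0)) :=
                mul_le_mul' le_rfl (weak_Mx f hf t ht)
          _ = _ := by
            rw [← mul_assoc, ← mul_assoc, ← ENNReal.ofReal_mul (by positivity), ← ENNReal.ofReal_ofNat 2, ← ENNReal.ofReal_mul (by positivity), Real.rpow_sub_one ht.ne' (q-1)]
            congr 2; ring
    _ = ENNReal.ofReal q * 2 * ∫⁻ x, f x * ∫⁻ t in Ioi (0:ℝ),
          (if ENNReal.ofReal t < 2 * f x then ENNReal.ofReal (t ^ (q - 1 - 1)) else 0) := by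
        rw [lintegral_const_mul' _ _ (by simp), ← mul_assoc, lintegral_lintegral_swap]
        · congr 1
          refine lintegral_congr fun x => ?_
          rw [← lintegral_const_mul]
          · simp only [mul_ite, mul_zero]
          · exact Measurable.ite (measurableSet_lt (by fun_prop) (by fun_prop)) (by fun_prop) measurable_const
        · exact mB.aemeasurable
    _ = ENNReal.ofReal q * 2 * ∫⁻ x, ((ENNReal.ofReal (q-1))⁻¹ * 2 ^ (q - 1)) * f x ^ q := by
        congr 1
        refine lintegral_congr fun x => ?_
        have := lc (q-1) hq1 (2 * f x)
        have h3 : ENNReal.ofReal (q-1) ≠ 0 := by simp [hq]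
        set J := ∫⁻ t in Ioi (0:ℝ), (if ENNReal.ofReal t < 2 * f x then ENNReal.ofReal (t ^ (q - 1 - 1)) else 0)
        have hJ : J = (ENNReal.ofReal (q-1))⁻¹ * (2 * f x) ^ (q-1) := by
          rw [← this, ← mul_assoc, ENNReal.inv_mul_cancel h3 (by simp), one_mul]
        have h4 : f x ^ q = f x * f x ^ (q-1) := by
          conv_lhs => rw [show q = 1 + (q-1) by ring]
          rw [ENNReal.rpow_add_of_nonneg _ _ (by norm_num) hq1.le, ENNReal.rpow_one]
        rw [hJ, h4, ENNReal.mul_rpow_of_nonneg _ _ hq1.le]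
        ring
    _ = _ := by
        rw [lintegral_const_mul _ (by fun_prop), ← mul_assoc]

lemma avg_le_Mx (f : ℝ → ℝ≥0∞) (z : ℤ × ℤ) (s : ℝ) (hs : s ∈ dI z.1 z.2) :
    ∫⁻ t in dI z.1 z.2, f t ≤ volume (dI z.1 z.2) * Mx f s := by
  have h : av f z ≤ Mx f s := by
    refine le_trans ?_ (le_iSup (fun z : ℤ × ℤ => (dI z.1 z.2).indicator (fun _ => av f z) s) z)
    simp [indicator_of_mem hs]
  calc _ = volume (dI z.1 z.2) * av f z := by
        rw [av, ENNReal.mul_div_cancel (volume_dI_ne_zero z.1 z.2) (volume_dI_ne_top _ _)]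
    _ ≤ _ := by gcongr

lemma coord_step {d : ℕ} (q : ℝ) (hq : 1 < q) : ∃ K : ℝ≥0∞, K ≠ ⊤ ∧
    ∀ (i : Fin d) (h : (Fin d → ℝ) → ℝ≥0∞), Measurable h → ∃ h' : (Fin d → ℝ) → ℝ≥0∞,
      Measurable h' ∧ ∫⁻ x, h' x ^ q ≤ K * ∫⁻ x, h x ^ q ∧
      ∀ (z : ℤ × ℤ) (x : Fin d → ℝ), x i ∈ dI z.1 z.2 →
        ∫⁻ t in dI z.1 z.2, h (Function.update x i t) ≤ volume (dI z.1 z.2) * h' x := by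
  obtain ⟨K, hK, H⟩ := strong_Mx q hq
  refine ⟨K, hK, fun i h hm => ?_⟩
  have hup : Measurable fun w : (Fin d → ℝ) × ℝ => h (Function.update w.1 i w.2) :=
    hm.comp measurable_update'
  have hm' : Measurable fun x : Fin d → ℝ => Mx (fun t => h (Function.update x i t)) (x i) := by
    unfold Mx
    refine Measurable.iSup fun z => ?_
    have : (fun x : Fin d → ℝ => (dI z.1 z.2).indicator
        (fun _ => av (fun t => h (Function.update x i t)) z) (x i)) =
        ({x : Fin d → ℝ | x i ∈ dI z.1 z.2}).indicator
          (fun x => av (fun t => h (Function.update x i t)) z) := by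
      ext x; simp [indicator]
    rw [this]
    refine Measurable.indicator ?_ (measurable_pi_apply i (measurableSet_dI _ _))
    unfold av
    exact (Measurable.lintegral_prod_right' (ν := volume.restrict (dI z.1 z.2)) hup).div_const _
  refine ⟨_, hm', ?_, fun z x hx => avg_le_Mx (fun t => h (Function.update x i t)) z (x i) hx⟩
  rw [← lintegral_const_mul _ (by fun_prop)]
  simp only [volume_pi]
  refine lintegral_le_of_lmarginal_le (μ := fun _ : Fin d => (volume : Measure ℝ)) {i}
    (by fun_prop) (by fun_prop) ?_
  rw [lmarginal_singleton, lmarginal_singleton]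
  intro x
  simp only [Function.update_idem, Function.update_self]
  have hx : Measurable fun t => h (Function.update x i t) := hm.comp (measurable_update x)
  rw [lintegral_const_mul _ (by fun_prop)]
  exact H _ hx

lemma strong_max (d : ℕ) (q : ℝ) (hq : 1 < q) : ∃ K : ℝ≥0∞, K ≠ ⊤ ∧
    ∀ g : (Fin d → ℝ) → ℝ≥0∞, Measurable g → ∃ h : (Fin d → ℝ) → ℝ≥0∞,
      Measurable h ∧ ∫⁻ x, h x ^ q ≤ K * ∫⁻ x, g x ^ q ∧
      ∀ (R : RectD d) (x : Fin d → ℝ), x ∈ rectD R →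
        ∫⁻ y in rectD R, g y ≤ volume (rectD R) * h x := by
  obtain ⟨K, hK, H⟩ := coord_step (d := d) q hq
  have main : ∀ s : Finset (Fin d), ∀ g : (Fin d → ℝ) → ℝ≥0∞, Measurable g →
      ∃ h : (Fin d → ℝ) → ℝ≥0∞, Measurable h ∧ ∫⁻ x, h x ^ q ≤ K ^ s.card * ∫⁻ x, g x ^ q ∧
      ∀ (R : RectD d) (x : Fin d → ℝ), x ∈ rectD R →
        lmarginal (fun i => (volume : Measure ℝ).restrict (dI (R i).1 (R i).2)) s g x ≤
          (∏ i ∈ s, volume (dI (R i).1 (R i).2)) * h x := by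
    intro s
    induction s using Finset.induction_on with
    | empty => exact fun g hg => ⟨g, hg, by simp, by simp⟩
    | insert i s hi ih =>
      intro g hg
      obtain ⟨h, hm, hh, hb⟩ := ih g hg
      obtain ⟨h', hm', hh', hb'⟩ := H i h hm
      refine ⟨h', hm', ?_, fun R x hx => ?_⟩
      · rw [Finset.card_insert_of_notMem hi, pow_succ', mul_assoc]
        exact hh'.trans (by gcongr)
      · rw [lmarginal_insert _ hg hi, Finset.prod_insert hi]
        have hxi : ∀ j, x j ∈ dI (R j).1 (R j).2 := fun j => hx j (mem_univ j)
        have hxs : Measurable fun t => h (Function.update x i t) := hm.comp (measurable_update x)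
        calc _ ≤ ∫⁻ t in dI (R i).1 (R i).2,
              (∏ i ∈ s, volume (dI (R i).1 (R i).2)) * h (Function.update x i t) := by
              refine setLIntegral_mono' (measurableSet_dI _ _) fun t ht => hb R _ fun j _ => ?_
              by_cases hj : j = i
              · subst hj; simpa using ht
              · simpa [Function.update_of_ne hj] using hxi j
          _ = (∏ i ∈ s, volume (dI (R i).1 (R i).2)) *
              ∫⁻ t in dI (R i).1 (R i).2, h (Function.update x i t) := lintegral_const_mul _ hxs
          _ ≤ (∏ i ∈ s, volume (dI (R i).1 (R i).2)) * (volume (dI (R i).1 (R i).2) * h' x) := by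
              gcongr; exact hb' (R i) x (hxi i)
          _ = _ := by ring
  refine ⟨K ^ (Finset.univ : Finset (Fin d)).card, ENNReal.pow_ne_top hK, fun g hg => ?_⟩
  obtain ⟨h, hm, hh, hb⟩ := main Finset.univ g hg
  refine ⟨h, hm, hh, fun R x hx => ?_⟩
  have := hb R x hx
  rw [lmarginal_univ, ← Measure.restrict_pi_pi, ← volume_pi] at this
  have hv : volume (rectD R) = ∏ i, volume (dI (R i).1 (R i).2) := by
    rw [rectD, volume_pi_pi]
  rw [hv]
  exact this

lemma measurableSet_rectD {d : ℕ} (R : RectD d) : MeasurableSet (rectD R) :=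
  MeasurableSet.univ_pi fun _ => measurableSet_dI _ _

lemma volume_rectD_ne_zero {d : ℕ} (R : RectD d) : volume (rectD R) ≠ 0 := by
  rw [rectD, volume_pi_pi]
  exact Finset.prod_ne_zero_iff.2 fun i _ => volume_dI_ne_zero _ _

lemma volume_rectD_ne_top {d : ℕ} (R : RectD d) : volume (rectD R) ≠ ⊤ := by
  rw [rectD, volume_pi_pi]
  exact ENNReal.prod_ne_top fun i _ => volume_dI_ne_top _ _

/-- Carleson embedding, finite version -/
lemma carleson_embed {d : ℕ} (U : Finset (RectD d)) (a c : RectD d → ℝ≥0∞) (A : ℝ≥0∞)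
    (hA : ∀ V ⊆ U, ∑ R ∈ V, a R ≤ A * volume (⋃ R ∈ V, rectD R))
    (h : (Fin d → ℝ) → ℝ≥0∞) (hm : Measurable h)
    (hc : ∀ R, ∀ x ∈ rectD R, c R ≤ h x) :
    ∑ R ∈ U, a R * c R ≤ A * ∫⁻ x in ⋃ R ∈ U, rectD R, h x := by
  classical
  have l1 : ∀ y : ℝ≥0∞, ∫⁻ t in Ioi (0:ℝ), (if ENNReal.ofReal t < y then 1 else 0) = y := by
    intro y
    simpa using lc 1 one_pos y
  have m1 : ∀ y : ℝ≥0∞, Measurable fun t : ℝ => (if ENNReal.ofReal t < y then (1:ℝ≥0∞) else 0) :=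
    fun y => Measurable.ite (measurableSet_lt (by fun_prop) (by fun_prop)) (by fun_prop)
      measurable_const
  have mA : Measurable fun (z : (Fin d → ℝ) × ℝ) =>
      if ENNReal.ofReal z.2 < h z.1 then (1:ℝ≥0∞) else 0 := by
    refine Measurable.ite (measurableSet_lt (by fun_prop) (by fun_prop)) (by fun_prop)
      measurable_const
  calc ∑ R ∈ U, a R * c R
      = ∑ R ∈ U, ∫⁻ t in Ioi (0:ℝ), a R * (if ENNReal.ofReal t < c R then 1 else 0) := by
        refine Finset.sum_congr rfl fun R _ => ?_
        rw [lintegral_const_mul _ (m1 _), l1]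
    _ = ∫⁻ t in Ioi (0:ℝ), ∑ R ∈ U, a R * (if ENNReal.ofReal t < c R then 1 else 0) := by
        rw [lintegral_finsetSum _ fun R _ => (m1 _).const_mul _]
    _ ≤ ∫⁻ t in Ioi (0:ℝ), A * ∫⁻ x in ⋃ R ∈ U, rectD R,
          (if ENNReal.ofReal t < h x then 1 else 0) := by
        refine lintegral_mono fun t => ?_
        simp only [mul_ite, mul_one, mul_zero]
        rw [← Finset.sum_filter]
        refine (hA _ (Finset.filter_subset _ _)).trans ?_
        gcongr
        have e1 : ∫⁻ x in ⋃ R ∈ U, rectD R, (if ENNReal.ofReal t < h x then (1:ℝ≥0∞) else 0)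
            = volume.restrict (⋃ R ∈ U, rectD R) {x | ENNReal.ofReal t < h x} := by
          rw [← one_mul (volume.restrict _ _),
            ← lintegral_indicator_const (s := {x | ENNReal.ofReal t < h x})
            (measurableSet_lt measurable_const hm)]
          refine lintegral_congr fun x => ?_
          simp [indicator]
        rw [e1, Measure.restrict_apply (measurableSet_lt measurable_const hm)]
        refine measure_mono ?_
        intro x hx
        simp only [mem_iUnion, Finset.mem_filter] at hx
        obtain ⟨R, ⟨hR, hRt⟩, hxR⟩ := hx
        exact ⟨hRt.trans_le (hc R x hxR), mem_biUnion (t := rectD) hR hxR⟩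
    _ = A * ∫⁻ x in ⋃ R ∈ U, rectD R, h x := by
        rw [lintegral_const_mul, lintegral_lintegral_swap]
        · simp_rw [l1]
        · exact (mA.comp measurable_swap).aemeasurable
        · exact Measurable.lintegral_prod_right' (mA.comp measurable_swap)

lemma finite_JN (d : ℕ) (p : ℝ) (hp : 1 < p) : ∃ K : ℝ≥0∞, K ≠ ⊤ ∧
    ∀ (U : Finset (RectD d)) (a : RectD d → ℝ≥0∞) (A : ℝ≥0∞), (∀ R, a R ≠ ⊤) →
    (∀ V ⊆ U, ∑ R ∈ V, a R ≤ A * volume (⋃ R ∈ V, rectD R)) →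
    ∫⁻ x, (∑ R ∈ U, (rectD R).indicator (fun _ => a R / volume (rectD R)) x) ^ p ≤
      (K * A) ^ p * volume (⋃ R ∈ U, rectD R) := by
  set q := p.conjExponent with hqd
  have hpq : p.HolderConjugate q := Real.HolderConjugate.conjExponent hp
  have hp0 : 0 < p := by linarith
  have hq0 : 0 < q := hpq.symm.pos
  obtain ⟨K, hK, H⟩ := strong_max d q hpq.symm.lt
  refine ⟨K ^ (1 / q), ENNReal.rpow_ne_top_of_nonneg (by positivity) hK, fun U a A ha hA => ?_⟩
  set S := ⋃ R ∈ U, rectD R with hS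
  set F : (Fin d → ℝ) → ℝ≥0∞ :=
    fun x => ∑ R ∈ U, (rectD R).indicator (fun _ => a R / volume (rectD R)) x with hF
  have mS : MeasurableSet S := Finset.measurableSet_biUnion _ fun R _ => measurableSet_rectD R
  have hSt : volume S ≠ ⊤ :=
    (measure_biUnion_lt_top U.finite_toSet fun R _ => (volume_rectD_ne_top R).lt_top).ne
  have mF : Measurable F :=
    Finset.measurable_sum _ fun R _ => measurable_const.indicator (measurableSet_rectD R)
  obtain ⟨h, hm, hh, hb⟩ := H (fun x => F x ^ (p-1)) (by fun_prop)
  set X := ∫⁻ x, F x ^ p with hX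
  have hXt : X ≠ ⊤ := by
    set B := ∑ R ∈ U, a R / volume (rectD R)
    have hB : B ≠ ⊤ :=
      ENNReal.sum_ne_top.2 fun R _ => ENNReal.div_ne_top (ha R) (volume_rectD_ne_zero R)
    have : ∀ x, F x ^ p ≤ S.indicator (fun _ => B ^ p) x := by
      intro x
      by_cases hx : x ∈ S
      · rw [indicator_of_mem hx]
        gcongr
        exact Finset.sum_le_sum fun R _ => indicator_le_self' (by simp) x
      · have : F x = 0 := by
          refine Finset.sum_eq_zero fun R hR => indicator_of_notMem (fun hxR => hx ?_) _
          exact mem_biUnion (t := rectD) hR hxR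
        simp [this, hp0]
    have h1 : X ≤ B ^ p * volume S := by
      rw [← lintegral_indicator_const mS]; exact lintegral_mono this
    exact ne_top_of_le_ne_top
      (ENNReal.mul_ne_top (ENNReal.rpow_ne_top_of_nonneg hp0.le hB) hSt) h1
  have hgq : ∫⁻ x, (F x ^ (p-1)) ^ q = X := by
    refine lintegral_congr fun x => ?_
    rw [← ENNReal.rpow_mul, hpq.sub_one_mul_conj]
  have h1 : X = ∑ R ∈ U, a R * ((∫⁻ y in rectD R, F y ^ (p-1)) / volume (rectD R)) := by
    calc X = ∫⁻ x, ∑ R ∈ U,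
          (rectD R).indicator (fun x => a R / volume (rectD R) * F x ^ (p-1)) x := by
          refine lintegral_congr fun x => ?_
          have : F x ^ p = F x * F x ^ (p-1) := by
            conv_lhs => rw [show p = 1 + (p-1) by ring]
            rw [ENNReal.rpow_add_of_nonneg _ _ (by norm_num) (by linarith), ENNReal.rpow_one]
          rw [this]
          conv_lhs => enter [1]; rw [hF]
          simp only
          rw [Finset.sum_mul]
          refine Finset.sum_congr rfl fun R _ => ?_
          by_cases hx : x ∈ rectD R <;> simp [hx]
      _ = _ := by
          rw [lintegral_finsetSum _ fun R _ =>
            Measurable.indicator (by fun_prop) (measurableSet_rectD R)]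
          refine Finset.sum_congr rfl fun R _ => ?_
          rw [lintegral_indicator (measurableSet_rectD R), lintegral_const_mul _ (by fun_prop)]
          simp only [div_eq_mul_inv]; ring
  have h2 : X ≤ A * ∫⁻ x in S, h x := by
    rw [h1]
    refine carleson_embed U a _ A hA h hm fun R x hx => ?_
    exact ENNReal.div_le_of_le_mul' (hb R x hx)
  have h3 : ∫⁻ x in S, h x ≤ volume S ^ (1/p) * (K * X) ^ (1/q) := by
    have := ENNReal.lintegral_mul_le_Lp_mul_Lq (volume.restrict S) hpq (f := fun _ => 1) (g := h)
      aemeasurable_const hm.aemeasurable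
    simp only [Pi.mul_apply, one_mul, ENNReal.one_rpow, lintegral_one,
      Measure.restrict_apply_univ] at this
    refine this.trans ?_
    gcongr
    exact (setLIntegral_le_lintegral _ _).trans (hgq ▸ hh)
  by_cases hX0 : X = 0
  · rw [hX0]; exact zero_le
  have h4 : X ^ (1/q) ≠ 0 := by simp [hX0, hXt]
  have h5 : X ^ (1/q) ≠ ⊤ := ENNReal.rpow_ne_top_of_nonneg (by positivity) hXt
  have h6 : X ^ (1/p) * X ^ (1/q) ≤ (K ^ (1/q) * A * volume S ^ (1/p)) * X ^ (1/q) := by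
    rw [← ENNReal.rpow_add _ _ hX0 hXt]
    have : 1 / p + 1 / q = 1 := by simpa using hpq.inv_add_inv_eq_one
    rw [this, ENNReal.rpow_one]
    refine h2.trans ?_
    calc _ ≤ A * (volume S ^ (1/p) * (K * X) ^ (1/q)) := by gcongr
      _ = _ := by rw [ENNReal.mul_rpow_of_nonneg _ _ (by positivity)]; ring
  rw [ENNReal.mul_le_mul_iff_left h4 h5] at h6
  calc X = (X ^ (1/p)) ^ p := by
        rw [← ENNReal.rpow_mul, one_div_mul_cancel hp0.ne', ENNReal.rpow_one]
    _ ≤ (K ^ (1/q) * A * volume S ^ (1/p)) ^ p := by gcongr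
    _ = _ := by
      rw [ENNReal.mul_rpow_of_nonneg _ _ hp0.le, ← ENNReal.rpow_mul (volume S),
        one_div_mul_cancel hp0.ne', ENNReal.rpow_one]

theorem stmt_13 (d : ℕ) (hd : 1 ≤ d) (p : ℝ) (hp : 1 < p) :
    ∃ C : ℝ, 0 < C ∧ ∀ α : RectD d → ℝ, (∀ R, 0 ≤ α R) → ∀ A : ℝ,
      (∀ 𝓥 : Set (RectD d), 0 < volume (shD 𝓥) → volume (shD 𝓥) < ⊤ →
        ∑' R : 𝓥, α (R : RectD d) ≤ A * (volume (shD 𝓥)).toReal) →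
      ∀ 𝓤 : Set (RectD d), 0 < volume (shD 𝓤) → volume (shD 𝓤) < ⊤ →
        eLpNorm (fun x => ∑' R : 𝓤,
            Set.indicator (rectD (R : RectD d))
              (fun _ => α (R : RectD d) / (volume (rectD (R : RectD d))).toReal) x)
          (ENNReal.ofReal p) volume
        ≤ ENNReal.ofReal (C * A) * volume (shD 𝓤) ^ (1 / p) := by
  classical
  obtain ⟨K, hK, H⟩ := finite_JN d p hp
  have hp0 : 0 < p := by linarith
  refine ⟨K.toReal + 1, by positivity, fun α hα A hA 𝓤 hU0 hUt => ?_⟩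
  have hcar : ∀ V : Finset (RectD d), V.Nonempty →
      ∑ R ∈ V, α R ≤ A * (volume (⋃ R ∈ V, rectD R)).toReal ∧
      0 < (volume (⋃ R ∈ V, rectD R)).toReal := by
    intro V hV
    obtain ⟨R, hR⟩ := hV
    have h1 : 0 < volume (⋃ R ∈ V, rectD R) :=
      (pos_iff_ne_zero.2 (volume_rectD_ne_zero R)).trans_le
        (measure_mono (subset_biUnion_of_mem (u := rectD) hR))
    have h2 : volume (⋃ R ∈ V, rectD R) < ⊤ :=
      measure_biUnion_lt_top V.finite_toSet fun R _ => (volume_rectD_ne_top R).lt_top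
    refine ⟨?_, ENNReal.toReal_pos h1.ne' h2.ne⟩
    have := hA (V : Set (RectD d)) (by simpa [shD] using h1) (by simpa [shD] using h2)
    rw [Finset.tsum_subtype' V α] at this
    simpa [shD] using this
  have hA0 : 0 ≤ A := by
    have hne : 𝓤.Nonempty := by
      rw [nonempty_iff_ne_empty]; rintro rfl; simp [shD] at hU0
    obtain ⟨R, hR⟩ := hne
    obtain ⟨h1, h2⟩ := hcar {R} (Finset.singleton_nonempty R)
    have h3 : 0 ≤ A * (volume (⋃ R' ∈ ({R} : Finset (RectD d)), rectD R')).toReal :=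
      le_trans (by simpa using hα R) h1
    exact nonneg_of_mul_nonneg_left h3 h2
  set a : RectD d → ℝ≥0∞ := fun R => ENNReal.ofReal (α R)
  have hcar' : ∀ V : Finset (RectD d), ∑ R ∈ V, a R ≤ ENNReal.ofReal A * volume (⋃ R ∈ V, rectD R) := by
    intro V
    rcases V.eq_empty_or_nonempty with rfl | hV
    · simp
    have h2 : volume (⋃ R ∈ V, rectD R) ≠ ⊤ :=
      (measure_biUnion_lt_top V.finite_toSet fun R _ => (volume_rectD_ne_top R).lt_top).ne
    rw [← ENNReal.ofReal_sum_of_nonneg fun R _ => hα R, ← ENNReal.ofReal_toReal h2,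
      ← ENNReal.ofReal_mul hA0]
    exact ENNReal.ofReal_le_ofReal (hcar V hV).1
  set φ : RectD d → (Fin d → ℝ) → ℝ≥0∞ :=
    fun R => (rectD R).indicator (fun _ => a R / volume (rectD R)) with hφ
  have hφm : ∀ R, Measurable (φ R) := fun R => measurable_const.indicator (measurableSet_rectD R)
  have hfin : ∀ t : Finset 𝓤, ∫⁻ x, (∑ R ∈ t, φ R x) ^ p ≤
      (K * ENNReal.ofReal A) ^ p * volume (shD 𝓤) := by
    intro t
    have := H (t.map (Function.Embedding.subtype _)) a (ENNReal.ofReal A) (by simp [a]) (fun V _ => hcar' V)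
    simp only [Finset.sum_map, Function.Embedding.subtype_apply] at this
    refine this.trans ?_
    gcongr
    refine iUnion₂_subset fun R hR => ?_
    obtain ⟨w, _, rfl⟩ := Finset.mem_map.1 hR
    exact subset_biUnion_of_mem (u := rectD) w.2
  have hinf : ∫⁻ x, (∑' R : 𝓤, φ R x) ^ p ≤ (K * ENNReal.ofReal A) ^ p * volume (shD 𝓤) := by
    have e : ∀ x, (∑' R : 𝓤, φ R x) ^ p = ⨆ t : Finset 𝓤, (∑ R ∈ t, φ R x) ^ p := by
      intro x
      rw [ENNReal.tsum_eq_iSup_sum]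
      exact (ENNReal.orderIsoRpow p hp0).map_iSup _
    simp_rw [e]
    rw [lintegral_iSup_directed_of_measurable]
    · exact iSup_le hfin
    · intro t
      exact (Finset.measurable_sum t (f := fun R : 𝓤 => φ R) fun R _ => hφm R).pow_const _
    · refine Monotone.directed_le fun s t hst x => ?_
      dsimp only
      gcongr
  have hpt : ∀ x, ‖∑' R : 𝓤, Set.indicator (rectD (R : RectD d))
              (fun _ => α (R : RectD d) / (volume (rectD (R : RectD d))).toReal) x‖ₑ ≤ ∑' R : 𝓤, φ R x := by
    intro x
    have e : ∀ R : RectD d, ENNReal.ofReal (Set.indicator (rectD R)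
              (fun _ => α R / (volume (rectD R)).toReal) x) = φ R x := by
      intro R
      by_cases hx : x ∈ rectD R
      · simp only [hφ, indicator_of_mem hx, a]
        rw [ENNReal.ofReal_div_of_pos (ENNReal.toReal_pos (volume_rectD_ne_zero R) (volume_rectD_ne_top R)),
          ENNReal.ofReal_toReal (volume_rectD_ne_top R)]
      · simp [hφ, hx]
    have hnn : ∀ R : RectD d, 0 ≤ Set.indicator (rectD R)
              (fun _ => α R / (volume (rectD R)).toReal) x :=
      fun R => indicator_nonneg (fun _ _ => div_nonneg (hα R) ENNReal.toReal_nonneg) x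
    by_cases hs : Summable fun R : 𝓤 => Set.indicator (rectD (R : RectD d))
              (fun _ => α (R : RectD d) / (volume (rectD (R : RectD d))).toReal) x
    · rw [Real.enorm_eq_ofReal (tsum_nonneg fun R : 𝓤 => hnn R),
        ENNReal.ofReal_tsum_of_nonneg (fun R : 𝓤 => hnn R) hs]
      simp_rw [e]; exact le_rfl
    · rw [tsum_eq_zero_of_not_summable hs]; simp
  rw [eLpNorm_eq_lintegral_rpow_enorm_toReal (by simp [hp0]) (by simp), ENNReal.toReal_ofReal hp0.le]
  calc _ ≤ ((K * ENNReal.ofReal A) ^ p * volume (shD 𝓤)) ^ (1 / p) := by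
        gcongr
        refine le_trans (lintegral_mono fun x => ?_) hinf
        gcongr
        exact hpt x
    _ = K * ENNReal.ofReal A * volume (shD 𝓤) ^ (1 / p) := by
        rw [ENNReal.mul_rpow_of_nonneg _ _ (by positivity), ← ENNReal.rpow_mul,
          mul_one_div_cancel hp0.ne', ENNReal.rpow_one]
    _ ≤ _ := by
        gcongr
        rw [ENNReal.ofReal_mul (by positivity)]
        gcongr
        rw [← ENNReal.ofReal_toReal hK]
        exact ENNReal.ofReal_le_ofReal (by simp)
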